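/- Fix α, σ > 0 and η ∈ (0,1], and let h(γ) = E[tanh(√γ Z + γ)] with Z standard Gaussian. Then the function F(q) = α(η + (1−η)h(q/σ²)) / (σ² + α(η + (1−η)h(q/σ²))) is concave on [0,1], satisfies F(0) = αη/(σ²+αη) > 0, is bounded by 1, and hence admits a unique fixed point q* ∈ [0,1). -/

import Mathlib

open MeasureTheory ProbabilityTheory Real

/-!
Since `1 - tanh x = e⁻ˣ / cosh x`, shifting the Gaussian by `√γ` turns the overlap into
`h(γ) = E[1 - e^{-γ/2} / cosh(√γ Z)] = E[1 - exp(-(γ/2 + log cosh √(γ Z²)))]`.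
As `tanh y / y` decreases, `x ↦ log cosh √x` is concave, hence so is the integrand in `γ` for each
value of `Z`, and `h` is concave and nonnegative. The state-evolution map is the concave increasing
function `x ↦ x / (σ² + x)` of an affine function of `h`. A concave function that starts
strictly above the diagonal and ends strictly below it crosses it exactly once.
-/

open Set
open scoped NNReal

section Concave

theorem concaveOn_comp_of_mapsTo {𝕜 E β γ : Type*} [Semiring 𝕜] [PartialOrder 𝕜]
    [AddCommMonoid E] [SMul 𝕜 E] [AddCommMonoid β] [PartialOrder β] [SMul 𝕜 β]
    [AddCommMonoid γ] [PartialOrder γ] [SMul 𝕜 γ] {s : Set E} {t : Set β} {f : E → β} {g : β → γ}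
    (hg : ConcaveOn 𝕜 t g) (hg_mono : MonotoneOn g t) (hf : ConcaveOn 𝕜 s f) (hst : MapsTo f s t) :
    ConcaveOn 𝕜 s (fun x => g (f x)) :=
  ⟨hf.1, fun _ hx _ hy _ _ ha hb hab =>
    (hg.2 (hst hx) (hst hy) ha hb hab).trans <|
      hg_mono (hg.1 (hst hx) (hst hy) ha hb hab) (hst (hf.1 hx hy ha hb hab))
        (hf.2 hx hy ha hb hab)⟩

theorem concaveOn_one_sub_exp_neg : ConcaveOn ℝ univ fun x : ℝ => 1 - exp (-x) :=
  (concaveOn_const 1 convex_univ).sub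
    (convexOn_exp.comp_linearMap (-LinearMap.id : ℝ →ₗ[ℝ] ℝ))

theorem monotone_one_sub_exp_neg : Monotone fun x : ℝ => 1 - exp (-x) :=
  fun _ _ hxy => sub_le_sub_left (exp_le_exp.2 (neg_le_neg hxy)) 1

section DivConstAdd

variable {c : ℝ}

theorem div_const_add_eq_one_sub {x : ℝ} (hx : c + x ≠ 0) : x / (c + x) = 1 - c * (c + x)⁻¹ := by
  field_simp
  ring

theorem monotoneOn_div_const_add (hc : 0 ≤ c) : MonotoneOn (fun x => x / (c + x)) (Ioi (-c)) := by
  intro x hx y hy hxy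
  have hcx : 0 < c + x := neg_lt_iff_pos_add'.1 hx
  have hcy : 0 < c + y := neg_lt_iff_pos_add'.1 hy
  simp only [div_const_add_eq_one_sub hcx.ne', div_const_add_eq_one_sub hcy.ne']
  gcongr

theorem concaveOn_div_const_add (hc : 0 ≤ c) :
    ConcaveOn ℝ (Ioi (-c)) fun x => x / (c + x) := by
  have hinv : ConvexOn ℝ (Ioi (-c)) fun x => (c + x)⁻¹ := by
    have h := (convexOn_zpow (𝕜 := ℝ) (-1)).translate_right c
    simpa [Function.comp_def] using h
  exact ((concaveOn_const 1 (convex_Ioi (-c))).sub (hinv.smul hc)).congr fun x hx =>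
    (div_const_add_eq_one_sub (neg_lt_iff_pos_add'.1 hx).ne').symm

end DivConstAdd

theorem eq_of_concaveOn_of_isFixedPt {𝕜 : Type*} [Field 𝕜] [LinearOrder 𝕜] [IsStrictOrderedRing 𝕜]
    {s : Set 𝕜} {f : 𝕜 → 𝕜} {a x y : 𝕜} (hf : ConcaveOn 𝕜 s f) (ha : a ∈ s) (haf : a < f a)
    (hx : x ∈ s) (hy : y ∈ s) (hax : a ≤ x) (hay : a ≤ y) (hfx : Function.IsFixedPt f x)
    (hfy : Function.IsFixedPt f y) : x = y := by
  by_contra hne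
  wlog hxy : x < y generalizing x y
  · exact this hy hx hay hax hfy hfx (Ne.symm hne) (lt_of_le_of_ne (not_lt.1 hxy) (Ne.symm hne))
  have hax : a < x := hax.lt_of_ne fun h => haf.ne' (h ▸ hfx)
  have hslope : (f y - f x) / (y - x) ≤ (f x - f a) / (x - a) :=
    hf.slope_anti_adjacent ha hy hax hxy
  rw [hfx.eq, hfy.eq, div_self (sub_pos.2 hxy).ne', one_le_div (sub_pos.2 hax)] at hslope
  linarith

theorem existsUnique_isFixedPt_of_concaveOn {f : ℝ → ℝ} {a b : ℝ}
    (hcont : ContinuousOn f (Icc a b)) (hf : ConcaveOn ℝ (Icc a b) f) (hab : a ≤ b)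
    (ha : a < f a) (hb : f b < b) : ∃! x, x ∈ Ico a b ∧ Function.IsFixedPt f x := by
  obtain ⟨x, hx, hfx⟩ := exists_mem_Icc_isFixedPt hcont hab ha.le hb.le
  have hxb : x < b := hx.2.lt_of_ne fun h => hb.ne (h ▸ hfx)
  refine ⟨x, ⟨⟨hx.1, hxb⟩, hfx⟩, fun y ⟨hy, hfy⟩ => ?_⟩
  exact eq_of_concaveOn_of_isFixedPt hf (left_mem_Icc.2 hab) ha (Ico_subset_Icc_self hy) hx
    hy.1 hx.1 hfy hfx

end Concave

section Hyperbolic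

theorem hasDerivAt_tanh (x : ℝ) : HasDerivAt tanh (1 / cosh x ^ 2) x := by
  have h := (hasDerivAt_sinh x).div (hasDerivAt_cosh x) (cosh_pos x).ne'
  rw [← sq, ← sq, cosh_sq_sub_sinh_sq] at h
  exact h.congr_of_eventuallyEq (.of_forall tanh_eq_sinh_div_cosh)

theorem continuous_tanh : Continuous tanh :=
  continuous_iff_continuousAt.2 fun x => (hasDerivAt_tanh x).continuousAt

theorem concaveOn_tanh : ConcaveOn ℝ (Ici 0) tanh := by
  refine AntitoneOn.concaveOn_of_deriv (convex_Ici 0) continuous_tanh.continuousOn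
    (fun x _ => (hasDerivAt_tanh x).differentiableAt.differentiableWithinAt) ?_
  rw [interior_Ici]
  intro x hx y hy hxy
  rw [(hasDerivAt_tanh x).deriv, (hasDerivAt_tanh y).deriv]
  have hcosh : cosh x ≤ cosh y :=
    cosh_le_cosh.2 (by rwa [abs_of_pos (mem_Ioi.1 hx), abs_of_pos (mem_Ioi.1 hy)])
  have := cosh_pos x
  gcongr

theorem antitoneOn_tanh_div_self : AntitoneOn (fun x => tanh x / x) (Ioi 0) := by
  have h := concaveOn_tanh.antitoneOn_slope_gt self_mem_Ici
  have hset : {y : ℝ | y ∈ Ici 0 ∧ 0 < y} = Ioi 0 := by grind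
  rw [hset] at h
  simpa [slope_fun_def_field] using h

theorem hasDerivAt_log_cosh_sqrt {x : ℝ} (hx : 0 < x) :
    HasDerivAt (fun x => log (cosh √x)) (tanh √x / √x / 2) x := by
  refine ((hasDerivAt_sqrt hx.ne').cosh.log (cosh_pos _).ne').congr_deriv ?_
  rw [tanh_eq_sinh_div_cosh]
  ring

theorem concaveOn_log_cosh_sqrt : ConcaveOn ℝ (Ici 0) fun x => log (cosh √x) := by
  refine AntitoneOn.concaveOn_of_deriv (convex_Ici 0) ?_ ?_ ?_
  · exact ((continuous_cosh.comp continuous_sqrt).log fun x => (cosh_pos _).ne').continuousOn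
  · rw [interior_Ici]
    exact fun x hx => (hasDerivAt_log_cosh_sqrt hx).differentiableAt.differentiableWithinAt
  · rw [interior_Ici]
    intro x hx y hy hxy
    rw [(hasDerivAt_log_cosh_sqrt hx).deriv, (hasDerivAt_log_cosh_sqrt hy).deriv]
    exact div_le_div_of_nonneg_right
      (antitoneOn_tanh_div_self (sqrt_pos.2 hx) (sqrt_pos.2 hy) (sqrt_le_sqrt hxy)) zero_le_two

theorem exp_mul_one_sub_tanh (x : ℝ) : exp x * (1 - tanh x) = 1 / cosh x := by
  rw [tanh_eq_sinh_div_cosh, one_sub_div (cosh_pos x).ne', cosh_sub_sinh, ← mul_div_assoc,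
    ← exp_add, add_neg_cancel, exp_zero]

theorem cosh_sqrt_mul {γ : ℝ} (hγ : 0 ≤ γ) (z : ℝ) : cosh (√γ * z) = cosh √(γ * z ^ 2) := by
  rw [sqrt_mul hγ, sqrt_sq_eq_abs, ← cosh_abs (√γ * z), abs_mul, abs_of_nonneg (sqrt_nonneg γ)]

theorem exp_neg_half_div_cosh_le_one {γ : ℝ} (hγ : 0 ≤ γ) (x : ℝ) : exp (-γ / 2) / cosh x ≤ 1 :=
  div_le_one_of_le₀ ((exp_le_one_iff.2 (by linarith)).trans (one_le_cosh x)) (cosh_pos x).le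

theorem one_sub_exp_div_cosh_eq {γ : ℝ} (hγ : 0 ≤ γ) (z : ℝ) :
    1 - exp (-γ / 2) / cosh (√γ * z) = 1 - exp (-(γ / 2 + log (cosh √(γ * z ^ 2)))) := by
  rw [neg_add, exp_add, exp_neg (log _), exp_log (cosh_pos _), cosh_sqrt_mul hγ, neg_div,
    div_eq_mul_inv]

theorem concaveOn_one_sub_exp_div_cosh (z : ℝ) :
    ConcaveOn ℝ (Ici 0) fun γ => 1 - exp (-γ / 2) / cosh (√γ * z) := by
  have hlin : ConcaveOn ℝ (Ici 0) fun γ : ℝ => γ / 2 :=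
    ((LinearMap.mulRight ℝ (2⁻¹ : ℝ)).concaveOn (convex_Ici 0)).congr fun γ _ => by
      simp [div_eq_mul_inv]
  have hlog : ConcaveOn ℝ (Ici 0) fun γ : ℝ => log (cosh √(γ * z ^ 2)) :=
    (concaveOn_log_cosh_sqrt.comp_linearMap (LinearMap.mulRight ℝ (z ^ 2))).subset
      (fun _ hγ => mul_nonneg hγ (sq_nonneg z)) (convex_Ici 0)
  exact (concaveOn_comp_of_mapsTo concaveOn_one_sub_exp_neg (monotone_one_sub_exp_neg.monotoneOn _)
    (hlin.add hlog) (mapsTo_univ _ _)).congr fun γ hγ => (one_sub_exp_div_cosh_eq hγ z).symm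

end Hyperbolic

section Gaussian

theorem integral_comp_add_right_gaussianReal {E : Type*} [NormedAddCommGroup E] [NormedSpace ℝ E]
    {v : ℝ≥0} (hv : v ≠ 0) (m y : ℝ) (f : ℝ → E) :
    ∫ x, f (x + y) ∂gaussianReal m v
      = ∫ x, exp ((y * (x - m) - y ^ 2 / 2) / v) • f x ∂gaussianReal m v := by
  have hdensity (x : ℝ) : gaussianPDFReal m v (x - y)
      = gaussianPDFReal m v x * exp ((y * (x - m) - y ^ 2 / 2) / v) := by
    simp only [gaussianPDFReal]
    rw [mul_assoc _ (exp _), ← exp_add]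
    congr 2
    have : (v : ℝ) ≠ 0 := by exact_mod_cast hv
    field_simp
    ring
  rw [integral_gaussianReal_eq_integral_smul hv, integral_gaussianReal_eq_integral_smul hv,
    ← integral_sub_right_eq_self _ y]
  simp only [sub_add_cancel, hdensity, mul_smul]

section Integrable

variable {Ω : Type*} [MeasurableSpace Ω] {μ : Measure Ω} [IsFiniteMeasure μ] {f : Ω → ℝ}

theorem integrable_tanh_comp (hf : AEStronglyMeasurable f μ) :
    Integrable (fun ω => tanh (f ω)) μ :=
  .of_bound (continuous_tanh.comp_aestronglyMeasurable hf) 1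
    (ae_of_all _ fun _ => (abs_tanh_lt_one _).le)

theorem integrable_const_div_cosh_comp (c : ℝ) (hf : AEStronglyMeasurable f μ) :
    Integrable (fun ω => c / cosh (f ω)) μ := by
  have hcont : Continuous fun x => c / cosh x :=
    continuous_const.div continuous_cosh fun x => (cosh_pos x).ne'
  refine .of_bound (hcont.comp_aestronglyMeasurable hf) |c| (ae_of_all _ fun ω => ?_)
  rw [norm_div, norm_of_nonneg (cosh_pos _).le]
  exact div_le_self (abs_nonneg c) (one_le_cosh _)

end Integrable

theorem integral_tanh_gaussianReal (s : ℝ) :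
    ∫ z, tanh (s * z + s ^ 2) ∂gaussianReal 0 1
      = ∫ z, (1 - exp (-s ^ 2 / 2) / cosh (s * z)) ∂gaussianReal 0 1 := by
  have htanh : Integrable (fun z => tanh (s * (z + s))) (gaussianReal 0 1) :=
    integrable_tanh_comp (by fun_prop)
  have hsech : Integrable (fun z => exp (-s ^ 2 / 2) / cosh (s * z)) (gaussianReal 0 1) :=
    integrable_const_div_cosh_comp _ (by fun_prop)
  have htilt (z : ℝ) : exp (s * z - s ^ 2 / 2) * (1 - tanh (s * z))
      = exp (-s ^ 2 / 2) / cosh (s * z) := by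
    rw [sub_eq_neg_add, exp_add, mul_assoc, exp_mul_one_sub_tanh, mul_one_div, neg_div]
  calc ∫ z, tanh (s * z + s ^ 2) ∂gaussianReal 0 1
      = 1 - ∫ z, (1 - tanh (s * (z + s))) ∂gaussianReal 0 1 := by
        rw [integral_sub (integrable_const 1) htanh]
        simp [mul_add, sq]
    _ = 1 - ∫ z, exp (s * z - s ^ 2 / 2) * (1 - tanh (s * z)) ∂gaussianReal 0 1 := by
        rw [integral_comp_add_right_gaussianReal one_ne_zero 0 s fun z => 1 - tanh (s * z)]
        simp
    _ = ∫ z, (1 - exp (-s ^ 2 / 2) / cosh (s * z)) ∂gaussianReal 0 1 := by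
        rw [integral_sub (integrable_const 1) hsech]
        simp [htilt]

end Gaussian

/-- The overlap `h(γ) = E[tanh(√γ Z + γ)]` between a uniform sign and its posterior mean given an
observation in standard Gaussian noise at signal-to-noise ratio `γ`. -/
noncomputable def signOverlap (γ : ℝ) : ℝ :=
  ∫ z, tanh (√γ * z + γ) ∂gaussianReal 0 1

section SignOverlap

@[simp]
theorem signOverlap_zero : signOverlap 0 = 0 := by
  simp [signOverlap]

theorem continuous_signOverlap : Continuous signOverlap :=
  continuous_of_dominated (bound := fun _ => 1)
    (fun _ => (continuous_tanh.comp (by fun_prop)).aestronglyMeasurable)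
    (fun _ => ae_of_all _ fun _ => (abs_tanh_lt_one _).le) (integrable_const 1)
    (ae_of_all _ fun _ => continuous_tanh.comp (by fun_prop))

theorem signOverlap_eq_integral {γ : ℝ} (hγ : 0 ≤ γ) :
    signOverlap γ = ∫ z, (1 - exp (-γ / 2) / cosh (√γ * z)) ∂gaussianReal 0 1 := by
  simpa only [signOverlap, sq_sqrt hγ] using integral_tanh_gaussianReal √γ

theorem signOverlap_nonneg {γ : ℝ} (hγ : 0 ≤ γ) : 0 ≤ signOverlap γ := by
  rw [signOverlap_eq_integral hγ]
  exact integral_nonneg fun z => sub_nonneg.2 (exp_neg_half_div_cosh_le_one hγ _)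

theorem concaveOn_signOverlap : ConcaveOn ℝ (Ici 0) signOverlap :=
  (integral_concaveOn_of_integrand_ae (convex_Ici 0) (ae_of_all _ concaveOn_one_sub_exp_div_cosh)
    fun _ _ => (integrable_const 1).sub (integrable_const_div_cosh_comp _ (by fun_prop))).congr
    fun _ hγ => (signOverlap_eq_integral hγ).symm

end SignOverlap

/-- The effective ratio of labelled samples to dimension when the current estimate has overlap `q`:
of the `α` samples per dimension, the labelled fraction `η` counts fully and every other sample
counts with the overlap of its inferred label. -/
noncomputable def effectiveLabelRatio (α σ η q : ℝ) : ℝ :=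
  α * (η + (1 - η) * signOverlap (q / σ ^ 2))

/-- The state-evolution map `F` of the semi-supervised Gaussian mixture model with sample ratio `α`,
noise level `σ` and labelled fraction `η`. -/
noncomputable def stateEvolution (α σ η q : ℝ) : ℝ :=
  effectiveLabelRatio α σ η q / (σ ^ 2 + effectiveLabelRatio α σ η q)

section StateEvolution

variable {α σ η q : ℝ}

theorem effectiveLabelRatio_zero : effectiveLabelRatio α σ η 0 = α * η := by
  simp [effectiveLabelRatio]

theorem effectiveLabelRatio_pos (hα : 0 < α) (hη : η ∈ Ioc 0 1) (hq : 0 ≤ q) :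
    0 < effectiveLabelRatio α σ η q := by
  have hoverlap : 0 ≤ signOverlap (q / σ ^ 2) := signOverlap_nonneg (by positivity)
  exact mul_pos hα (add_pos_of_pos_of_nonneg hη.1 (mul_nonneg (sub_nonneg.2 hη.2) hoverlap))

theorem continuous_effectiveLabelRatio : Continuous (effectiveLabelRatio α σ η) := by
  have := continuous_signOverlap
  unfold effectiveLabelRatio
  fun_prop

theorem concaveOn_effectiveLabelRatio (hα : 0 ≤ α) (hη : η ≤ 1) :
    ConcaveOn ℝ (Ici 0) (effectiveLabelRatio α σ η) := by
  have hoverlap : ConcaveOn ℝ (Ici 0) fun q => signOverlap (q / σ ^ 2) :=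
    (concaveOn_signOverlap.comp_linearMap (LinearMap.mulRight ℝ (σ ^ 2)⁻¹)).subset
      (fun _ hq => mul_nonneg hq (inv_nonneg.2 (sq_nonneg σ))) (convex_Ici 0)
  exact ((concaveOn_const η (convex_Ici 0)).add (hoverlap.smul (sub_nonneg.2 hη))).smul hα

theorem stateEvolution_zero : stateEvolution α σ η 0 = α * η / (σ ^ 2 + α * η) := by
  rw [stateEvolution, effectiveLabelRatio_zero]

theorem stateEvolution_pos (hα : 0 < α) (hη : η ∈ Ioc 0 1) (hq : 0 ≤ q) :
    0 < stateEvolution α σ η q := by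
  have := effectiveLabelRatio_pos (σ := σ) hα hη hq
  unfold stateEvolution
  positivity

theorem stateEvolution_lt_one (hα : 0 < α) (hσ : σ ≠ 0) (hη : η ∈ Ioc 0 1) (hq : 0 ≤ q) :
    stateEvolution α σ η q < 1 := by
  have := effectiveLabelRatio_pos (σ := σ) hα hη hq
  exact (div_lt_one (by positivity)).2 (lt_add_of_pos_left _ (by positivity))

theorem continuousOn_stateEvolution (hα : 0 < α) (hη : η ∈ Ioc 0 1) :
    ContinuousOn (stateEvolution α σ η) (Ici 0) := by
  have hcont : ContinuousOn (effectiveLabelRatio α σ η) (Ici 0) :=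
    continuous_effectiveLabelRatio.continuousOn
  exact hcont.div (continuousOn_const.add hcont) fun q hq =>
    (add_pos_of_nonneg_of_pos (sq_nonneg σ) (effectiveLabelRatio_pos hα hη hq)).ne'

theorem concaveOn_stateEvolution (hα : 0 < α) (hη : η ∈ Ioc 0 1) :
    ConcaveOn ℝ (Ici 0) (stateEvolution α σ η) := by
  unfold stateEvolution
  exact concaveOn_comp_of_mapsTo (concaveOn_div_const_add (sq_nonneg σ))
    (monotoneOn_div_const_add (sq_nonneg σ)) (concaveOn_effectiveLabelRatio hα.le hη.2)
    fun _ hq => (neg_nonpos.2 (sq_nonneg σ)).trans_lt (effectiveLabelRatio_pos hα hη hq)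

end StateEvolution

/-- With `h(γ) = E[tanh(√γ Z + γ)]`, the state-evolution map
`F(q) = α(η + (1−η)h(q/σ²)) / (σ² + α(η + (1−η)h(q/σ²)))` is concave on `[0,1]`,
`F(0) = αη/(σ²+αη) > 0`, `F ≤ 1`, and `F` admits a unique fixed point in `[0,1)`. -/
theorem stmt10 (α σ η : ℝ) (hα : 0 < α) (hσ : 0 < σ) (hη : η ∈ Set.Ioc (0 : ℝ) 1)
    (h : ℝ → ℝ)
    (hdef : h = fun γ : ℝ => ∫ z, Real.tanh (Real.sqrt γ * z + γ) ∂(gaussianReal 0 1))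
    (F : ℝ → ℝ)
    (hF : F = fun q : ℝ => α * (η + (1 - η) * h (q / σ ^ 2))
        / (σ ^ 2 + α * (η + (1 - η) * h (q / σ ^ 2)))) :
    ConcaveOn ℝ (Set.Icc 0 1) F
    ∧ F 0 = α * η / (σ ^ 2 + α * η)
    ∧ 0 < F 0
    ∧ (∀ q ∈ Set.Icc (0 : ℝ) 1, F q ≤ 1)
    ∧ ∃! q, q ∈ Set.Ico (0 : ℝ) 1 ∧ F q = q := by
  obtain rfl : F = stateEvolution α σ η := by subst hdef; exact hF
  have hconc : ConcaveOn ℝ (Icc 0 1) (stateEvolution α σ η) :=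
    (concaveOn_stateEvolution hα hη).subset Icc_subset_Ici_self (convex_Icc 0 1)
  have hpos : 0 < stateEvolution α σ η 0 := stateEvolution_pos hα hη le_rfl
  have hlt {q : ℝ} (hq : q ∈ Icc 0 1) : stateEvolution α σ η q < 1 :=
    stateEvolution_lt_one hα hσ.ne' hη hq.1
  have hcont : ContinuousOn (stateEvolution α σ η) (Icc 0 1) :=
    (continuousOn_stateEvolution hα hη).mono Icc_subset_Ici_self
  exact ⟨hconc, stateEvolution_zero, hpos, fun q hq => (hlt hq).le,
    existsUnique_isFixedPt_of_concaveOn hcont hconc zero_le_one hpos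
      (hlt (right_mem_Icc.2 zero_le_one))⟩
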